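/- For all integers n ≥ 0 and 0 ≤ i ≤ n, the number of large Schröder paths of semi-length n with exactly i up steps equals (1/(i+1))·C(n+i, i)·C(n, i). -/

import Mathlib

/-- Schröder steps are encoded by `Fin 3`: `0` is an up step `u = (1,1)`,
`1` is a down step `d = (1,-1)`, and `2` is a horizontal step `h = (2,0)`. -/
def IsLargeSchroeder (l : List (Fin 3)) : Prop :=
  l.count 0 = l.count 1 ∧ ∀ p, p <+: l → p.count 1 ≤ p.count 0

/-- A little Schröder path: a large Schröder path with no horizontal step at
height `0`, i.e. every `h` step is preceded by strictly more `u`'s than `d`'s. -/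
def IsLittleSchroeder (l : List (Fin 3)) : Prop :=
  IsLargeSchroeder l ∧ ∀ p q, l = p ++ (2 : Fin 3) :: q → p.count 1 < p.count 0

/-- The semi-length of a Schröder word: number of `u` steps plus number of `h` steps. -/
def schroederSemiLength (l : List (Fin 3)) : ℕ := l.count 0 + l.count 2

def schW : ℕ → ℕ → ℕ → ℕ → Finset (List (Fin 3))
  | 0, a, b, c => if a = 0 ∧ b = 0 ∧ c = 0 then {[]} else ∅
  | m + 1, a, b, c =>
    if a < b then ∅ else
      (if a = 0 then ∅ else (schW m (a - 1) b c).image (List.cons 0)) ∪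
      ((if b = 0 then ∅ else (schW m a (b - 1) c).image (List.cons 1)) ∪
      (if c = 0 then ∅ else (schW m a b (c - 1)).image (List.cons 2)))

lemma mem_schW (m : ℕ) : ∀ (a b c : ℕ) (l : List (Fin 3)), l ∈ schW m a b c ↔
    l.length = m ∧ l.count 0 = a ∧ l.count 1 = b ∧ l.count 2 = c ∧
      ∀ p, p <:+ l → p.count 1 ≤ p.count 0 := by
  induction m with
  | zero =>
    intro a b c l
    rw [schW]
    constructor
    · intro h
      split_ifs at h with h1
      · simp only [Finset.mem_singleton] at h
        subst h
        obtain ⟨rfl, rfl, rfl⟩ := h1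
        simp
      · simp at h
    · rintro ⟨h, rfl, rfl, rfl, -⟩
      rw [List.length_eq_zero_iff] at h
      subst h
      simp
  | succ m ih =>
    intro a b c l
    rw [schW]
    cases l with
    | nil => split_ifs <;> simp
    | cons x t =>
      have key : (∀ p, p <:+ x :: t → p.count 1 ≤ p.count 0) ↔
          ((x :: t).count 1 ≤ (x :: t).count 0 ∧ ∀ p, p <:+ t → p.count 1 ≤ p.count 0) := by
        constructor
        · intro h
          exact ⟨h _ List.suffix_rfl, fun p hp => h p (hp.trans (List.suffix_cons _ _))⟩
        · rintro ⟨h1, h2⟩ p hp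
          rcases List.suffix_cons_iff.1 hp with rfl | hp
          · exact h1
          · exact h2 p hp
      rw [key]
      have hx : x = 0 ∨ x = 1 ∨ x = 2 := by clear * -; revert x; decide
      rcases hx with rfl | rfl | rfl
      · by_cases h : a < b <;> by_cases ha : a = 0 <;> by_cases hb : b = 0 <;> by_cases hc : c = 0 <;> simp [h, ha, hb, hc, ih, List.count_cons] <;> grind
      · by_cases h : a < b <;> by_cases ha : a = 0 <;> by_cases hb : b = 0 <;> by_cases hc : c = 0 <;> simp [h, ha, hb, hc, ih, List.count_cons] <;> grind
      · by_cases h : a < b <;> by_cases ha : a = 0 <;> by_cases hb : b = 0 <;> by_cases hc : c = 0 <;> simp [h, ha, hb, hc, ih, List.count_cons] <;> grind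

open Nat in
lemma card_schW (m : ℕ) : ∀ (a b c : ℕ), a + b + c = m → b ≤ a + 1 →
    ((schW m a b c).card : ℤ) * ((a + 1)! * b ! * c !) = (a + 1 - b) * m ! := by
  induction m with
  | zero =>
    intro a b c h _
    obtain ⟨rfl, rfl, rfl⟩ : a = 0 ∧ b = 0 ∧ c = 0 := by omega
    simp [schW]
  | succ m ih =>
    intro a b c h hab
    rw [schW]
    by_cases hlt : a < b
    · obtain rfl : b = a + 1 := by omega
      simp
    rw [if_neg hlt, Finset.card_union_of_disjoint, Finset.card_union_of_disjoint]
    · have e1 : (((if a = 0 then ∅ else (schW m (a - 1) b c).image (List.cons 0)).card : ℕ) : ℤ)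
          * ((a + 1)! * b ! * c !) = (a + 1) * (a - b) * m ! := by
        rcases a with _ | a
        · obtain rfl : b = 0 := by omega
          simp
        · have := ih a b c (by omega) (by omega)
          rw [if_neg (by omega), Finset.card_image_of_injective _ List.cons_injective,
            Nat.factorial_succ (a + 1)]
          push_cast [Nat.add_sub_cancel] at this ⊢
          linear_combination (a + 1 + 1 : ℤ) * this
      have e2 : (((if b = 0 then ∅ else (schW m a (b - 1) c).image (List.cons 1)).card : ℕ) : ℤ)
          * ((a + 1)! * b ! * c !) = b * (a + 2 - b) * m ! := by
        rcases b with _ | b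
        · simp
        · have := ih a b c (by omega) (by omega)
          rw [if_neg (by omega), Finset.card_image_of_injective _ List.cons_injective,
            Nat.factorial_succ b]
          push_cast [Nat.add_sub_cancel] at this ⊢
          linear_combination (b + 1 : ℤ) * this
      have e3 : (((if c = 0 then ∅ else (schW m a b (c - 1)).image (List.cons 2)).card : ℕ) : ℤ)
          * ((a + 1)! * b ! * c !) = c * (a + 1 - b) * m ! := by
        rcases c with _ | c
        · simp
        · have := ih a b c (by omega) (by omega)
          rw [if_neg (by omega), Finset.card_image_of_injective _ List.cons_injective,
            Nat.factorial_succ c]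
          push_cast [Nat.add_sub_cancel] at this ⊢
          linear_combination (c + 1 : ℤ) * this
      have hm : (m : ℤ) + 1 = a + b + c := by exact_mod_cast h.symm
      rw [Nat.factorial_succ m]
      push_cast
      rw [hm]
      linear_combination e1 + e2 + e3
    · rw [Finset.disjoint_left]
      intro l
      split_ifs <;> simp
      rintro x - rfl
      simp
    · rw [Finset.disjoint_left]
      intro l
      split_ifs <;> simp <;> (rintro x - rfl; simp)

open Nat in
/-- For all integers `n ≥ 0` and `0 ≤ i ≤ n`, the number of
large Schröder paths of semi-length `n` with exactly `i` up steps equals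
`(1/(i+1)) * C(n+i, i) * C(n, i)`. -/
theorem stmt_12 (n i : ℕ) (hin : i ≤ n) :
    (Nat.card {l : List (Fin 3) // IsLargeSchroeder l ∧
        schroederSemiLength l = n ∧ l.count 0 = i} : ℚ) =
      (1 / (i + 1)) * Nat.choose (n + i) i * Nat.choose n i := by
  obtain ⟨c, rfl⟩ := Nat.exists_eq_add_of_le hin
  have hlen : ∀ l : List (Fin 3), l.length = l.count 0 + l.count 1 + l.count 2 := by
    intro l
    induction l with
    | nil => simp
    | cons x t ih =>
      have hx : x = 0 ∨ x = 1 ∨ x = 2 := by revert x; decide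
      rcases hx with rfl | rfl | rfl <;> simp [List.count_cons, ih] <;> omega
  have hcard : Nat.card {l : List (Fin 3) // IsLargeSchroeder l ∧
        schroederSemiLength l = i + c ∧ l.count 0 = i} = (schW (i + i + c) i i c).card := by
    rw [← Finset.card_image_of_injective (schW (i + i + c) i i c)
      (List.reverse_injective (α := Fin 3)), ← Nat.card_eq_finsetCard]
    apply Nat.card_congr
    apply Equiv.subtypeEquivRight
    intro l
    have hm : l ∈ (schW (i + i + c) i i c).image List.reverse ↔
        l.reverse ∈ schW (i + i + c) i i c := by
      simp only [Finset.mem_image]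
      constructor
      · rintro ⟨t, ht, rfl⟩
        simpa using ht
      · intro h
        exact ⟨_, h, by simp⟩
    have hp : (∀ p, p <:+ l.reverse → p.count 1 ≤ p.count 0) ↔
        ∀ p, p <+: l → p.count 1 ≤ p.count 0 := by
      constructor
      · intro h p hp
        simpa using h p.reverse (List.reverse_suffix.2 hp)
      · intro h p hp
        have := h p.reverse (List.reverse_suffix.1 (by simpa using hp))
        simpa using this
    rw [hm, mem_schW, hp]
    have := hlen l
    simp only [IsLargeSchroeder, schroederSemiLength, List.length_reverse, List.count_reverse]
    constructor
    · rintro ⟨⟨h1, h2⟩, h3, h4⟩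
      exact ⟨by omega, by omega, by omega, by omega, h2⟩
    · rintro ⟨h0, h1, h2, h3, h4⟩
      exact ⟨⟨by omega, h4⟩, by omega, by omega⟩
  rw [hcard]
  have h := card_schW (i + i + c) i i c rfl (by omega)
  have h' : ((schW (i + i + c) i i c).card : ℚ) * ((i + 1)! * i ! * c !) = (i + i + c)! := by
    have : (((schW (i + i + c) i i c).card * ((i + 1)! * i ! * c !) : ℤ) : ℚ)
      = (((i + 1 - i) * (i + i + c)! : ℤ) : ℚ) := by rw [h]
    push_cast at this
    rw [this]; ring
  have h1 : ((i + c).choose i : ℚ) = (i + c)! / (i ! * c !) := Nat.cast_add_choose ℚ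
  have h2 : ((i + c + i).choose i : ℚ) = (i + i + c)! / (i ! * (i + c)!) := by
    have := Nat.cast_add_choose ℚ (a := i) (b := i + c)
    rw [show i + c + i = i + (i + c) by ring, this, add_assoc]
  rw [h1, h2, ← h', Nat.factorial_succ i]
  have := Nat.factorial_ne_zero i
  have := Nat.factorial_ne_zero c
  have := Nat.factorial_ne_zero (i + c)
  have : (i : ℚ) + 1 ≠ 0 := by positivity
  push_cast
  field_simp
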